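/- For a quadratic irrational η and reals 0 < a < b < 1, the set of primes p with a < {ηp} < b has relative density b − a among the primes; that is, (1/π(N)) · #{p ≤ N : p prime, a < frac(ηp) < b} → b − a as N → ∞. -/

import Mathlib

open Filter

/-- η is a quadratic irrational: irrational root of an integer quadratic. -/
def IsQuadraticIrrational (η : ℝ) : Prop :=
  Irrational η ∧ ∃ A B C : ℤ, A ≠ 0 ∧ (A : ℝ) * η ^ 2 + B * η + C = 0

/-!
Quadratic irrationals are badly approximable: by Liouville's inequality `k ‖kη‖` is bounded below.
Write `e(x) = exp(2πix)`. Vaughan's identity splits `∑_{n ≤ N} Λ(n) e(nθ)` into sums of two kinds.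
For badly approximable `θ` the Type I sums are bounded termwise, since a geometric sum with ratio
`e(dθ)` is at most `1 / (2 ‖dθ‖) ≪ d`. The Type II sums are reduced by Cauchy-Schwarz to sums
`∑ m e(m(a - b)θ)`, where `‖(a - b)θ‖` is rarely small because the points `bθ`, `b ≤ a`, are
`c / a`-separated. Together these save a power of `N`. As
`∑_{p ≤ N} (log N - log p) = π(N) log N - ϑ(N) = o(N)`, the weights `log p` may be replaced by
`log N`, so `∑_{p ≤ N} e(pθ) = o(π(N))`. Nonzero multiples of `η` are again badly approximable, so
Weyl's criterion equidistributes `ηp` over the primes.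
-/

open AddCircle Finset MeasureTheory Topology
open scoped ArithmeticFunction ArithmeticFunction.Moebius ArithmeticFunction.zeta

section ExponentialSums

lemma exists_coe_eq_and_abs_eq_norm (θ : UnitAddCircle) :
    ∃ r : ℝ, (r : UnitAddCircle) = θ ∧ |r| = ‖θ‖ := by
  obtain ⟨x, rfl⟩ := QuotientAddGroup.mk_surjective θ
  refine ⟨x - round x, ?_, UnitAddCircle.norm_eq.symm⟩
  rw [AddCircle.coe_sub, sub_eq_self]
  exact (AddCircle.coe_eq_zero_iff 1).2 ⟨round x, by simp⟩

lemma four_mul_norm_le_norm_toCircle_sub_one (θ : UnitAddCircle) :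
    4 * ‖θ‖ ≤ ‖(toCircle θ : ℂ) - 1‖ := by
  obtain ⟨r, rfl, hr⟩ := exists_coe_eq_and_abs_eq_norm θ
  have hr_le : |Real.pi * r| ≤ Real.pi / 2 := by
    have := norm_le_half_period 1 (x := (r : UnitAddCircle)) one_ne_zero
    rw [abs_mul, abs_of_pos Real.pi_pos, hr]
    rw [abs_one] at this
    nlinarith [Real.pi_pos]
  have hsin := Real.mul_abs_le_abs_sin hr_le
  rw [abs_mul, abs_of_pos Real.pi_pos, ← mul_assoc, div_mul_cancel₀ _ Real.pi_ne_zero] at hsin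
  have hexp : (toCircle (r : UnitAddCircle) : ℂ) =
      Complex.exp (Complex.I * ((2 * (Real.pi * r) : ℝ) : ℂ)) := by
    rw [toCircle_apply_mk, Circle.coe_exp]
    congr 1
    push_cast
    ring
  rw [hexp, Complex.norm_exp_I_mul_ofReal_sub_one, mul_div_cancel_left₀ _ two_ne_zero, norm_mul,
    Real.norm_eq_abs, Real.norm_eq_abs, abs_two, ← hr]
  linarith

lemma norm_sum_range_toCircle_le {θ : UnitAddCircle} (hθ : θ ≠ 0) (n : ℕ) :
    ‖∑ m ∈ range n, (toCircle (m • θ) : ℂ)‖ ≤ 1 / (2 * ‖θ‖) := by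
  have hpos : 0 < ‖θ‖ := norm_pos_iff.2 hθ
  have hsub := four_mul_norm_le_norm_toCircle_sub_one θ
  have hne : (toCircle θ : ℂ) ≠ 1 := fun h ↦ by
    rw [h, sub_self, norm_zero] at hsub
    linarith
  have hnum : ‖(toCircle θ : ℂ) ^ n - 1‖ ≤ 2 :=
    (norm_sub_le _ _).trans (by rw [norm_pow, Circle.norm_coe, one_pow, norm_one]; norm_num)
  simp_rw [toCircle_nsmul, Circle.coe_pow]
  calc ‖∑ m ∈ range n, (toCircle θ : ℂ) ^ m‖
      = ‖(toCircle θ : ℂ) ^ n - 1‖ / ‖(toCircle θ : ℂ) - 1‖ := by rw [geom_sum_eq hne, norm_div]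
    _ ≤ 2 / (4 * ‖θ‖) := by gcongr
    _ = 1 / (2 * ‖θ‖) := by field_simp; norm_num

lemma norm_sum_Ioc_mul_le_of_monotone {f : ℕ → ℝ} (hf : Monotone f) (hf₀ : 0 ≤ f 0) {z : ℕ → ℂ}
    {B : ℝ} (hz : ∀ n, ‖∑ m ∈ range n, z m‖ ≤ B) (N : ℕ) :
    ‖∑ n ∈ Ioc 0 N, (f n : ℂ) * z n‖ ≤ 2 * f N * B := by
  have hnonneg (n : ℕ) : 0 ≤ f n := hf₀.trans (hf n.zero_le)
  have hB : 0 ≤ B := (norm_nonneg _).trans (hz 0)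
  rcases N.eq_zero_or_pos with rfl | hN
  · simpa using mul_nonneg (mul_nonneg zero_le_two hf₀) hB
  have hterm {c : ℝ} (hc : 0 ≤ c) (n : ℕ) : ‖c • ∑ m ∈ range n, z m‖ ≤ c * B := by
    rw [norm_smul, Real.norm_of_nonneg hc]
    exact mul_le_mul_of_nonneg_left (hz n) hc
  have htele : ∑ i ∈ Ioc 0 (N - 1), (f (i + 1) - f i) = f N - f 1 := by
    obtain ⟨M, rfl⟩ := Nat.exists_eq_add_one.2 hN
    rw [Nat.add_sub_cancel, ← Ico_add_one_add_one_eq_Ioc, sum_Ico_sub f (by omega), zero_add]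
  have hparts := sum_Ioc_by_parts f z hN
  simp only [zero_add, Complex.real_smul] at hparts hterm
  rw [hparts]
  calc ‖(f N : ℂ) * ∑ m ∈ range (N + 1), z m - (f 1 : ℂ) * ∑ m ∈ range 1, z m -
        ∑ i ∈ Ioc 0 (N - 1), ((f (i + 1) - f i : ℝ) : ℂ) * ∑ m ∈ range (i + 1), z m‖
      ≤ f N * B + f 1 * B + ∑ i ∈ Ioc 0 (N - 1), (f (i + 1) - f i) * B :=
        norm_sub_le_of_le (norm_sub_le_of_le (hterm (hnonneg N) _) (hterm (hnonneg 1) _))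
          (norm_sum_le_of_le _ fun i _ ↦ hterm (sub_nonneg.2 (hf i.le_succ)) _)
    _ = 2 * f N * B := by rw [← sum_mul, htele]; ring

/-- The exponential sum `∑_{1 ≤ n ≤ N} f(n) e(nθ)`, where `e(θ) = exp(2πiθ)`. -/
noncomputable def expSum (f : ℕ → ℝ) (θ : UnitAddCircle) (N : ℕ) : ℂ :=
  ∑ n ∈ Ioc 0 N, (f n : ℂ) * toCircle (n • θ)

lemma norm_ofReal_mul_toCircle (x : ℝ) (θ : UnitAddCircle) :
    ‖(x : ℂ) * toCircle θ‖ = |x| := by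
  rw [norm_mul, Circle.norm_coe, mul_one, Complex.norm_real, Real.norm_eq_abs]

lemma norm_expSum_le_sum_abs (f : ℕ → ℝ) (θ : UnitAddCircle) (N : ℕ) :
    ‖expSum f θ N‖ ≤ ∑ n ∈ Ioc 0 N, |f n| :=
  norm_sum_le_of_le _ fun _ _ ↦ (norm_ofReal_mul_toCircle _ _).le

lemma norm_expSum_le_of_monotone {f : ℕ → ℝ} (hf : Monotone f) (hf₀ : 0 ≤ f 0)
    {θ : UnitAddCircle} (hθ : θ ≠ 0) (N : ℕ) : ‖expSum f θ N‖ ≤ f N / ‖θ‖ := by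
  refine (norm_sum_Ioc_mul_le_of_monotone hf hf₀ (norm_sum_range_toCircle_le hθ) N).trans_eq ?_
  have := norm_ne_zero_iff.2 hθ
  field_simp

lemma sum_Ioc_sum_divisorsAntidiagonal {M : Type*} [AddCommMonoid M] (F : ℕ → ℕ → M) (N : ℕ) :
    ∑ n ∈ Ioc 0 N, ∑ p ∈ n.divisorsAntidiagonal, F p.1 p.2 =
      ∑ d ∈ Ioc 0 N, ∑ m ∈ Ioc 0 (N / d), F d m := by
  rw [sum_sigma', sum_sigma']
  refine sum_nbij' (fun x ↦ ⟨x.2.1, x.2.2⟩) (fun y ↦ ⟨y.1 * y.2, (y.1, y.2)⟩) ?_ ?_ ?_ ?_ ?_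
  · rintro ⟨n, d, m⟩ h
    simp only [mem_sigma, mem_Ioc, Nat.mem_divisorsAntidiagonal] at h ⊢
    obtain ⟨⟨hn, hnN⟩, rfl, -⟩ := h
    have hd := Nat.pos_of_mul_pos_right hn
    have hm := Nat.pos_of_mul_pos_left hn
    exact ⟨⟨hd, (Nat.le_mul_of_pos_right d hm).trans hnN⟩, hm,
      (Nat.le_div_iff_mul_le hd).2 (by rwa [mul_comm])⟩
  · rintro ⟨d, m⟩ h
    simp only [mem_sigma, mem_Ioc, Nat.mem_divisorsAntidiagonal] at h ⊢
    obtain ⟨⟨hd, -⟩, hm, hmN⟩ := h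
    exact ⟨⟨Nat.mul_pos hd hm, by rw [mul_comm]; exact (Nat.le_div_iff_mul_le hd).1 hmN⟩, trivial,
      (Nat.mul_pos hd hm).ne'⟩
  · rintro ⟨n, d, m⟩ h
    simp only [mem_sigma, Nat.mem_divisorsAntidiagonal] at h
    obtain ⟨-, rfl, -⟩ := h
    rfl
  · exact fun _ _ ↦ rfl
  · exact fun _ _ ↦ rfl

lemma expSum_mul (f g : ArithmeticFunction ℝ) (θ : UnitAddCircle) (N : ℕ) :
    expSum ⇑(f * g) θ N = ∑ d ∈ Ioc 0 N, (f d : ℂ) * expSum g (d • θ) (N / d) := by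
  simp only [expSum]
  have hterm (n : ℕ) : ((f * g) n : ℂ) * toCircle (n • θ) =
      ∑ p ∈ n.divisorsAntidiagonal, (f p.1 : ℂ) * (g p.2 * toCircle (p.2 • p.1 • θ)) := by
    rw [ArithmeticFunction.mul_apply, Complex.ofReal_sum, sum_mul]
    refine sum_congr rfl fun p hp ↦ ?_
    rw [smul_smul, mul_comm p.2, (Nat.mem_divisorsAntidiagonal.1 hp).1, Complex.ofReal_mul,
      mul_assoc]
  simp only [hterm, mul_sum]
  exact sum_Ioc_sum_divisorsAntidiagonal
    (fun d m ↦ (f d : ℂ) * (g m * toCircle (m • d • θ))) N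

end ExponentialSums

section BadlyApproximable

lemma card_le_of_pairwise_le_abs_sub {ι : Type*} {s : Finset ι} {r : ι → ℝ} {δ y : ℝ} (hδ : 0 < δ)
    (hy : 0 ≤ y) (hr : ∀ i ∈ s, |r i| ≤ y)
    (hsep : (s : Set ι).Pairwise fun i j ↦ δ ≤ |r i - r j|) : (#s : ℝ) ≤ 2 * (y / δ) + 2 := by
  have hinj : Set.InjOn (fun i ↦ ⌊r i / δ⌋) s := fun i hi j hj hij ↦ by
    by_contra hne
    have hlt := Int.abs_sub_lt_one_of_floor_eq_floor hij
    rw [← sub_div, abs_div, abs_of_pos hδ, div_lt_one hδ] at hlt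
    exact (hsep hi hj hne).not_gt hlt
  have hmaps : Set.MapsTo (fun i ↦ ⌊r i / δ⌋) s (Icc ⌊-(y / δ)⌋ ⌊y / δ⌋ : Finset ℤ) := fun i hi ↦ by
    have := abs_le.1 (hr i hi)
    rw [coe_Icc, ← neg_div]
    exact ⟨Int.floor_le_floor (by gcongr; exact this.1),
      Int.floor_le_floor (by gcongr; exact this.2)⟩
  have hyδ : 0 ≤ y / δ := by positivity
  have hcard := card_le_card_of_injOn _ hmaps hinj
  rw [Int.card_Icc] at hcard
  have hcard' : (#s : ℤ) ≤ ⌊y / δ⌋ + 1 - ⌊-(y / δ)⌋ := by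
    have : ⌊-(y / δ)⌋ ≤ ⌊y / δ⌋ := Int.floor_le_floor (by linarith)
    omega
  have hcast : (#s : ℝ) ≤ ⌊y / δ⌋ + 1 - ⌊-(y / δ)⌋ := by exact_mod_cast hcard'
  linarith [Int.floor_le (y / δ), Int.lt_floor_add_one (-(y / δ))]

/-- `θ` is badly approximable with constant `c`: its multiples satisfy `‖kθ‖ ≥ c / k`, where `‖·‖`
is the distance to the nearest integer, i.e. the norm of `ℝ / ℤ`. -/
def IsBadlyApproximableWith (c : ℝ) (θ : UnitAddCircle) : Prop :=
  0 < c ∧ ∀ k : ℕ, 0 < k → c / k ≤ ‖k • θ‖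

/-- `θ` is badly approximable: `k ‖kθ‖` is bounded away from zero. -/
def IsBadlyApproximable (θ : UnitAddCircle) : Prop :=
  ∃ c, IsBadlyApproximableWith c θ

namespace IsBadlyApproximableWith

variable {c : ℝ} {θ : UnitAddCircle}

lemma nsmul_ne_zero (hθ : IsBadlyApproximableWith c θ) {k : ℕ} (hk : 0 < k) : k • θ ≠ 0 := by
  have := hθ.2 k hk
  have : 0 < c / k := div_pos hθ.1 (by exact_mod_cast hk)
  exact norm_pos_iff.1 (by linarith)

lemma le_norm_nsmul_sub_nsmul (hθ : IsBadlyApproximableWith c θ) {H m n : ℕ} (hm : m ∈ Ioc 0 H)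
    (hn : n ∈ Ioc 0 H) (hmn : m ≠ n) : c / H ≤ ‖m • θ - n • θ‖ := by
  wlog hlt : n < m generalizing m n
  · rw [norm_sub_rev]
    exact this hn hm hmn.symm (by omega)
  rw [mem_Ioc] at hm hn
  rw [sub_eq_add_neg, ← sub_nsmul θ hlt.le]
  refine le_trans ?_ (hθ.2 (m - n) (by omega))
  have hpos : (0 : ℝ) < (m - n : ℕ) := by exact_mod_cast Nat.sub_pos_of_lt hlt
  have hle : ((m - n : ℕ) : ℝ) ≤ H := by exact_mod_cast (by omega : m - n ≤ H)
  have := hθ.1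
  gcongr

lemma card_norm_sub_nsmul_lt_le (hθ : IsBadlyApproximableWith c θ) (β : UnitAddCircle) {y : ℝ}
    (hy : 0 ≤ y) (H : ℕ) :
    (#{n ∈ Ioc 0 H | ‖β - n • θ‖ < y} : ℝ) ≤ 2 * (y * H / c) + 2 := by
  rcases H.eq_zero_or_pos with rfl | hH
  · simp
  choose r hr hr_abs using fun n : ℕ ↦ exists_coe_eq_and_abs_eq_norm (β - n • θ)
  have hsep (m n : ℕ) : ‖m • θ - n • θ‖ ≤ |r m - r n| := by
    have : ((r m - r n : ℝ) : UnitAddCircle) = -(m • θ - n • θ) := by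
      rw [AddCircle.coe_sub, hr, hr]
      abel
    rw [← norm_neg, ← this]
    exact QuotientAddGroup.norm_mk_le_norm
  have := card_le_of_pairwise_le_abs_sub (s := {n ∈ Ioc 0 H | ‖β - n • θ‖ < y}) (r := r)
    (δ := c / H) (div_pos hθ.1 (by exact_mod_cast hH)) hy
    (fun n hn ↦ (hr_abs n).trans_le (mem_filter.1 hn).2.le)
    (fun m hm n hn hmn ↦ (hθ.le_norm_nsmul_sub_nsmul (mem_filter.1 hm).1 (mem_filter.1 hn).1
      hmn).trans (hsep m n))
  rwa [div_div_eq_mul_div] at this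

lemma zsmul (hθ : IsBadlyApproximableWith c θ) {n : ℤ} (hn : n ≠ 0) :
    IsBadlyApproximableWith (c / n.natAbs) (n • θ) := by
  have hn' : 0 < n.natAbs := Int.natAbs_pos.2 hn
  refine ⟨div_pos hθ.1 (by exact_mod_cast hn'), fun k hk ↦ ?_⟩
  have hnorm : ‖k • n • θ‖ = ‖(n.natAbs * k) • θ‖ := by
    rw [← natCast_zsmul, ← natCast_zsmul, smul_smul, Nat.cast_mul, mul_comm]
    rcases Int.natAbs_eq n with h | h
    · rw [← h]
    · rw [h, neg_mul, neg_smul, norm_neg, Int.natAbs_neg, Int.natAbs_natCast]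
  rw [hnorm, div_div, ← Nat.cast_mul]
  exact hθ.2 _ (Nat.mul_pos hn' hk)

end IsBadlyApproximableWith

lemma IsBadlyApproximable.zsmul {θ : UnitAddCircle} (hθ : IsBadlyApproximable θ) {n : ℤ}
    (hn : n ≠ 0) : IsBadlyApproximable (n • θ) :=
  let ⟨_, hc⟩ := hθ
  ⟨_, hc.zsmul hn⟩

lemma IsQuadraticIrrational.isBadlyApproximable {η : ℝ} (hη : IsQuadraticIrrational η) :
    IsBadlyApproximable (η : UnitAddCircle) := by
  obtain ⟨hirr, A, B, C, hA, hroot⟩ := hη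
  have hdeg := Polynomial.natDegree_quadratic (b := B) (c := C) hA
  obtain ⟨M, hM, hLiouville⟩ := Liouville.exists_pos_real_of_irrational_root hirr
    (Polynomial.ne_zero_of_natDegree_gt (one_lt_two.trans_eq hdeg.symm)) (by simpa using hroot)
  rw [hdeg] at hLiouville
  refine ⟨1 / M, by positivity, fun k hk ↦ ?_⟩
  obtain ⟨j, rfl⟩ := Nat.exists_eq_add_one.2 hk
  have hj : (0 : ℝ) < j + 1 := by positivity
  rw [← AddCircle.coe_nsmul, UnitAddCircle.norm_eq, nsmul_eq_mul]
  set z := round (((j + 1 : ℕ) : ℝ) * η)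
  have hfactor : ((j + 1 : ℕ) : ℝ) * η - z = (j + 1) * (η - z / (j + 1)) := by
    push_cast
    field_simp
  rw [hfactor, abs_mul, abs_of_pos hj, div_div, div_le_iff₀ (by positivity)]
  push_cast
  calc (1 : ℝ) ≤ (j + 1) ^ 2 * (|η - z / (j + 1)| * M) := hLiouville z j
    _ = (j + 1) * |η - z / (j + 1)| * (M * (j + 1)) := by ring

end BadlyApproximable

section Convolution

/-- The restriction of an arithmetic function to `[1, U]`. -/
def truncLE {R : Type*} [Zero R] (U : ℕ) (f : ArithmeticFunction R) : ArithmeticFunction R :=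
  ⟨fun n ↦ if n ≤ U then f n else 0, by simp⟩

lemma truncLE_apply {R : Type*} [Zero R] (U : ℕ) (f : ArithmeticFunction R) (n : ℕ) :
    truncLE U f n = if n ≤ U then f n else 0 := rfl

lemma expSum_truncLE (f : ArithmeticFunction ℝ) (θ : UnitAddCircle) {N U : ℕ} (h : N ≤ U) :
    expSum (truncLE U f) θ N = expSum f θ N :=
  sum_congr rfl fun n hn ↦ by rw [truncLE_apply, if_pos ((mem_Ioc.1 hn).2.trans h)]

lemma expSum_mul_truncLE {f g : ArithmeticFunction ℝ} {U : ℕ} (hU : 0 < U)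
    (hf : ∀ n ≤ U, f n = 0) (θ : UnitAddCircle) (N : ℕ) :
    expSum ⇑(f * truncLE (N / U) g) θ N = expSum ⇑(f * g) θ N := by
  rw [expSum_mul, expSum_mul]
  refine sum_congr rfl fun d _ ↦ ?_
  rcases le_or_gt d U with hdU | hUd
  · simp only [hf d hdU, Complex.ofReal_zero, zero_mul]
  · rw [expSum_truncLE g _ (Nat.div_le_div_left hUd.le hU)]

lemma sum_Ioc_ite_le {C : ℝ} (hC : 0 ≤ C) (N K : ℕ) :
    ∑ n ∈ Ioc 0 N, (if n ≤ K then C else 0) ≤ K * C := by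
  have hcard : #{n ∈ Ioc 0 N | n ≤ K} ≤ K :=
    (card_le_card fun n hn ↦ mem_Ioc.2 ⟨(mem_Ioc.1 (mem_filter.1 hn).1).1,
      (mem_filter.1 hn).2⟩).trans_eq (Nat.card_Ioc 0 K)
  rw [← sum_filter, sum_const, nsmul_eq_mul]
  gcongr

lemma norm_expSum_truncLE_le {f : ArithmeticFunction ℝ} {N : ℕ} {B : ℝ} (hf : ∀ n ≤ N, |f n| ≤ B)
    (θ : UnitAddCircle) (U : ℕ) : ‖expSum (truncLE U f) θ N‖ ≤ U * B := by
  refine (norm_expSum_le_sum_abs _ _ _).trans ((sum_le_sum fun n hn ↦ ?_).trans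
    (sum_Ioc_ite_le ((abs_nonneg _).trans (hf 0 N.zero_le)) N U))
  rw [truncLE_apply]
  split_ifs
  · exact hf n (mem_Ioc.1 hn).2
  · rw [abs_zero]

lemma IsBadlyApproximableWith.norm_expSum_mul_le_of_monotone {c : ℝ} {θ : UnitAddCircle}
    (hθ : IsBadlyApproximableWith c θ) {f g : ArithmeticFunction ℝ} {N K : ℕ} {A : ℝ}
    (hf : ∀ n ≤ N, |f n| ≤ A) (hfK : ∀ n, K < n → f n = 0) (hg : Monotone g) :
    ‖expSum ⇑(f * g) θ N‖ ≤ K ^ 2 * A * g N / c := by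
  have hc := hθ.1
  have hg₀ (n : ℕ) : 0 ≤ g n := by simpa using hg n.zero_le
  have hA : 0 ≤ A := (abs_nonneg _).trans (hf 0 N.zero_le)
  have hterm : ∀ d ∈ Ioc 0 N, ‖(f d : ℂ) * expSum g (d • θ) (N / d)‖ ≤
      if d ≤ K then K * A * g N / c else 0 := fun d hd ↦ by
    rw [mem_Ioc] at hd
    split_ifs with hdK
    swap
    · simp [hfK d (by omega)]
    have hd₀ : (0 : ℝ) < d := by exact_mod_cast hd.1
    have hinner : ‖expSum g (d • θ) (N / d)‖ ≤ g N / (c / d) :=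
      (norm_expSum_le_of_monotone hg (hg₀ 0) (hθ.nsmul_ne_zero hd.1) _).trans
        (div_le_div₀ (hg₀ N) (hg (N.div_le_self d)) (by positivity) (hθ.2 d hd.1))
    rw [norm_mul, Complex.norm_real, Real.norm_eq_abs]
    calc |f d| * ‖expSum g (d • θ) (N / d)‖ ≤ A * (g N / (c / d)) := by
          gcongr
          exact hf d hd.2
      _ = d * A * g N / c := by field_simp
      _ ≤ K * A * g N / c := by gcongr; exact hg₀ N
  calc ‖expSum ⇑(f * g) θ N‖ ≤ ∑ d ∈ Ioc 0 N, if d ≤ K then K * A * g N / c else 0 := by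
        rw [expSum_mul]
        exact norm_sum_le_of_le _ hterm
    _ ≤ K * (K * A * g N / c) :=
        sum_Ioc_ite_le (div_nonneg (mul_nonneg (by positivity) (hg₀ N)) hc.le) N K
    _ = K ^ 2 * A * g N / c := by ring

end Convolution

section Bilinear

lemma sum_Ioc_one_div_le (N : ℕ) : ∑ m ∈ Ioc 0 N, (1 : ℝ) / m ≤ 1 + Real.log N := by
  have h := harmonic_le_one_add_log N
  rw [harmonic_eq_sum_Icc] at h
  push_cast at h
  simpa only [one_div, ← Icc_add_one_left_eq_Ioc, zero_add] using h

lemma sq_norm_sum_mul_le {f : ℕ → ℝ} {A : ℝ} (hf : ∀ n, |f n| ≤ A) (z : ℕ → ℂ) (N : ℕ) :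
    ‖∑ m ∈ Ioc 0 N, (f m : ℂ) * z m‖ ^ 2 ≤
      A ^ 2 * (1 + Real.log N) * ∑ m ∈ Ioc 0 N, (m : ℝ) * ‖z m‖ ^ 2 := by
  have : 0 ≤ A := (abs_nonneg _).trans (hf 0)
  have hle : ‖∑ m ∈ Ioc 0 N, (f m : ℂ) * z m‖ ≤ A * ∑ m ∈ Ioc 0 N, ‖z m‖ := by
    rw [mul_sum]
    refine norm_sum_le_of_le _ fun m _ ↦ ?_
    rw [norm_mul, Complex.norm_real, Real.norm_eq_abs]
    exact mul_le_mul_of_nonneg_right (hf m) (norm_nonneg _)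
  have hCauchy : (∑ m ∈ Ioc 0 N, ‖z m‖) ^ 2 ≤
      (∑ m ∈ Ioc 0 N, (1 : ℝ) / m) * ∑ m ∈ Ioc 0 N, (m : ℝ) * ‖z m‖ ^ 2 := by
    refine sum_sq_le_sum_mul_sum_of_sq_le_mul _ (fun _ _ ↦ by positivity)
      (fun _ _ ↦ by positivity) fun m hm ↦ ?_
    have : (0 : ℝ) < m := by exact_mod_cast (mem_Ioc.1 hm).1
    exact le_of_eq (by field_simp)
  calc ‖∑ m ∈ Ioc 0 N, (f m : ℂ) * z m‖ ^ 2 ≤ (A * ∑ m ∈ Ioc 0 N, ‖z m‖) ^ 2 := by gcongr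
    _ = A ^ 2 * (∑ m ∈ Ioc 0 N, ‖z m‖) ^ 2 := mul_pow _ _ _
    _ ≤ A ^ 2 * ((1 + Real.log N) * ∑ m ∈ Ioc 0 N, (m : ℝ) * ‖z m‖ ^ 2) := by
        gcongr
        exact hCauchy.trans (by gcongr; exact sum_Ioc_one_div_le N)
    _ = A ^ 2 * (1 + Real.log N) * ∑ m ∈ Ioc 0 N, (m : ℝ) * ‖z m‖ ^ 2 := (mul_assoc _ _ _).symm

lemma conj_coe_toCircle (θ : UnitAddCircle) :
    (starRingEnd ℂ) (toCircle θ : ℂ) = toCircle (-θ) := by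
  rw [toCircle_neg, Circle.coe_inv_eq_conj]

lemma norm_expSum_neg (f : ℕ → ℝ) (θ : UnitAddCircle) (N : ℕ) :
    ‖expSum f (-θ) N‖ = ‖expSum f θ N‖ := by
  rw [← Complex.norm_conj (expSum f θ N)]
  simp only [expSum, map_sum, map_mul, Complex.conj_ofReal, conj_coe_toCircle, smul_neg]

lemma sum_mul_sq_norm_expSum (g : ℕ → ℝ) (θ : UnitAddCircle) (N : ℕ) :
    ((∑ m ∈ Ioc 0 N, (m : ℝ) * ‖expSum g (m • θ) (N / m)‖ ^ 2 : ℝ) : ℂ) =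
      ∑ a ∈ Ioc 0 N, ∑ b ∈ Ioc 0 N,
        (g a : ℂ) * g b * expSum (fun m ↦ m) (a • θ - b • θ) (N / max a b) := by
  have hsq (m : ℕ) : (m : ℂ) * (‖expSum g (m • θ) (N / m)‖ : ℂ) ^ 2 =
      ∑ p ∈ Ioc 0 (N / m) ×ˢ Ioc 0 (N / m),
        (g p.1 : ℂ) * g p.2 * (m * toCircle (m • (p.1 • θ - p.2 • θ))) := by
    rw [← Complex.mul_conj', expSum, map_sum, sum_mul_sum, ← sum_product', mul_sum]
    refine sum_congr rfl fun p _ ↦ ?_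
    rw [map_mul, Complex.conj_ofReal, conj_coe_toCircle, smul_sub, sub_eq_add_neg, toCircle_add,
      Circle.coe_mul, smul_comm m p.1, smul_comm m p.2]
    ring
  rw [← sum_product', Complex.ofReal_sum]
  simp only [Complex.ofReal_mul, Complex.ofReal_pow, Complex.ofReal_natCast, hsq]
  simp only [expSum, mul_sum, Complex.ofReal_natCast]
  refine sum_comm' fun m p ↦ ?_
  simp only [mem_Ioc, mem_product]
  constructor
  · rintro ⟨⟨hm, -⟩, ⟨ha, haN⟩, hb, hbN⟩
    refine ⟨⟨hm, ?_⟩, ⟨ha, haN.trans (N.div_le_self m)⟩, hb, hbN.trans (N.div_le_self m)⟩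
    rw [Nat.le_div_iff_mul_le (lt_max_of_lt_left ha), mul_comm, ← Nat.le_div_iff_mul_le hm]
    exact max_le haN hbN
  · rintro ⟨⟨hm, hmN⟩, ⟨ha, -⟩, hb, -⟩
    have hmax := hmN
    rw [Nat.le_div_iff_mul_le (lt_max_of_lt_left ha), mul_comm, ← Nat.le_div_iff_mul_le hm,
      max_le_iff] at hmax
    exact ⟨⟨hm, hmN.trans (N.div_le_self _)⟩, ⟨ha, hmax.1⟩, hb, hmax.2⟩

lemma norm_expSum_natCast_le (θ : UnitAddCircle) {δ : ℝ} (hδ : 0 < δ) {X : ℕ} {Y : ℝ} (hX : X ≤ Y) :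
    ‖expSum (fun m ↦ m) θ X‖ ≤ Y ^ 2 * (if ‖θ‖ < δ then 1 else 0) + Y / δ := by
  have hY : 0 ≤ Y := X.cast_nonneg.trans hX
  split_ifs with h
  · calc ‖expSum (fun m ↦ m) θ X‖ ≤ ∑ m ∈ Ioc 0 X, |(m : ℝ)| := norm_expSum_le_sum_abs _ _ _
      _ ≤ ∑ _ ∈ Ioc 0 X, Y := by
        refine sum_le_sum fun m hm ↦ ?_
        rw [Nat.abs_cast]
        exact (Nat.cast_le.2 (mem_Ioc.1 hm).2).trans hX
      _ ≤ Y ^ 2 := by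
        rw [sum_const, Nat.card_Ioc, Nat.sub_zero, nsmul_eq_mul, sq]
        gcongr
      _ ≤ Y ^ 2 * 1 + Y / δ := by rw [mul_one]; exact le_add_of_nonneg_right (by positivity)
  · have hδθ : δ ≤ ‖θ‖ := not_lt.1 h
    calc ‖expSum (fun m ↦ m) θ X‖ ≤ X / ‖θ‖ :=
          norm_expSum_le_of_monotone (f := fun m ↦ m) Nat.mono_cast (by simp)
            (norm_pos_iff.1 (hδ.trans_le hδθ)) X
      _ ≤ Y / δ := by gcongr
      _ = Y ^ 2 * 0 + Y / δ := by ring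

lemma IsBadlyApproximableWith.sum_norm_expSum_natCast_le {c : ℝ} {θ : UnitAddCircle}
    (hθ : IsBadlyApproximableWith c θ) {δ : ℝ} (hδ : 0 < δ) (N : ℕ) {a : ℕ} (ha : 0 < a) :
    ∑ b ∈ Ioc 0 a, ‖expSum (fun m ↦ m) (a • θ - b • θ) (N / a)‖ ≤
      2 * N ^ 2 * δ / c * (1 / a) + 2 * N ^ 2 * (1 / a) ^ 2 + N / δ := by
  have hc := hθ.1
  have : (0 : ℝ) < a := by exact_mod_cast ha
  calc ∑ b ∈ Ioc 0 a, ‖expSum (fun m ↦ m) (a • θ - b • θ) (N / a)‖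
      ≤ ∑ b ∈ Ioc 0 a, (((N : ℝ) / a) ^ 2 * (if ‖a • θ - b • θ‖ < δ then 1 else 0) + N / a / δ) :=
        sum_le_sum fun b _ ↦ norm_expSum_natCast_le _ hδ Nat.cast_div_le
    _ = ((N : ℝ) / a) ^ 2 * #{b ∈ Ioc 0 a | ‖a • θ - b • θ‖ < δ} + a * (N / a / δ) := by
        rw [sum_add_distrib, ← mul_sum, sum_boole, sum_const, Nat.card_Ioc, Nat.sub_zero,
          nsmul_eq_mul]
    _ ≤ ((N : ℝ) / a) ^ 2 * (2 * (δ * a / c) + 2) + a * (N / a / δ) := by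
        gcongr
        exact hθ.card_norm_sub_nsmul_lt_le (a • θ) hδ.le a
    _ = 2 * N ^ 2 * δ / c * (1 / a) + 2 * N ^ 2 * (1 / a) ^ 2 + N / δ := by field_simp

lemma sum_sum_le_two_mul_sum_sum_filter_le {ι : Type*} [LinearOrder ι] (s : Finset ι)
    {K : ι → ι → ℝ} (hK : ∀ a b, 0 ≤ K a b) (hsymm : ∀ a b, K a b = K b a) :
    ∑ a ∈ s, ∑ b ∈ s, K a b ≤ 2 * ∑ a ∈ s, ∑ b ∈ s with b ≤ a, K a b := by
  have hswap : ∑ a ∈ s, ∑ b ∈ s with a ≤ b, K a b = ∑ a ∈ s, ∑ b ∈ s with b ≤ a, K a b := by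
    simp only [sum_filter]
    rw [sum_comm]
    simp only [hsymm]
  rw [two_mul]
  nth_rw 2 [← hswap]
  rw [← sum_add_distrib]
  refine sum_le_sum fun a _ ↦ ?_
  simp only [sum_filter]
  rw [← sum_add_distrib]
  refine sum_le_sum fun b _ ↦ ?_
  have := hK a b
  rcases le_total a b with h | h
  · rw [if_pos h]; split_ifs <;> linarith
  · rw [if_pos h]; split_ifs <;> linarith

lemma sum_mul_sq_norm_expSum_le {g : ℕ → ℝ} {N : ℕ} {B : ℝ} (hg : ∀ n ≤ N, |g n| ≤ B)
    {J : Finset ℕ} (hJ : J ⊆ Ioc 0 N) (hgJ : ∀ n ∉ J, g n = 0) (θ : UnitAddCircle) :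
    ∑ m ∈ Ioc 0 N, (m : ℝ) * ‖expSum g (m • θ) (N / m)‖ ^ 2 ≤
      2 * B ^ 2 * ∑ a ∈ J, ∑ b ∈ Ioc 0 a, ‖expSum (fun m ↦ m) (a • θ - b • θ) (N / a)‖ := by
  have hB : 0 ≤ B := (abs_nonneg _).trans (hg 0 N.zero_le)
  have hgB {a : ℕ} (ha : a ∈ J) : |g a| ≤ B := hg a (mem_Ioc.1 (hJ ha)).2
  let K (a b : ℕ) : ℝ := ‖expSum (fun m ↦ m) (a • θ - b • θ) (N / max a b)‖
  have hsymm (a b : ℕ) : K a b = K b a := by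
    simp only [K]
    rw [← norm_expSum_neg, neg_sub, max_comm]
  have hexpand : ((∑ m ∈ Ioc 0 N, (m : ℝ) * ‖expSum g (m • θ) (N / m)‖ ^ 2 : ℝ) : ℂ) =
      ∑ a ∈ J, ∑ b ∈ J, (g a : ℂ) * g b * expSum (fun m ↦ m) (a • θ - b • θ) (N / max a b) := by
    rw [sum_mul_sq_norm_expSum]
    refine (sum_subset hJ fun a _ ha ↦ ?_).symm.trans
      (sum_congr rfl fun a _ ↦ (sum_subset hJ fun b _ hb ↦ ?_).symm)
    · simp [hgJ a ha]
    · simp [hgJ b hb]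
  calc ∑ m ∈ Ioc 0 N, (m : ℝ) * ‖expSum g (m • θ) (N / m)‖ ^ 2
      ≤ ∑ a ∈ J, ∑ b ∈ J, B ^ 2 * K a b := by
        rw [← Complex.norm_of_nonneg (sum_nonneg fun _ _ ↦ by positivity), hexpand]
        refine norm_sum_le_of_le _ fun a ha ↦ norm_sum_le_of_le _ fun b hb ↦ ?_
        rw [norm_mul, norm_mul, Complex.norm_real, Complex.norm_real, sq]
        exact mul_le_mul_of_nonneg_right
          (mul_le_mul (hgB ha) (hgB hb) (norm_nonneg _) hB) (norm_nonneg _)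
    _ = B ^ 2 * ∑ a ∈ J, ∑ b ∈ J, K a b := by simp only [mul_sum]
    _ ≤ B ^ 2 * (2 * ∑ a ∈ J, ∑ b ∈ J with b ≤ a, K a b) := by
        gcongr
        exact sum_sum_le_two_mul_sum_sum_filter_le J (fun _ _ ↦ norm_nonneg _) hsymm
    _ = 2 * B ^ 2 * ∑ a ∈ J, ∑ b ∈ J with b ≤ a, K a b := by ring
    _ ≤ 2 * B ^ 2 * ∑ a ∈ J, ∑ b ∈ Ioc 0 a, K a b := by
        refine mul_le_mul_of_nonneg_left (sum_le_sum fun a _ ↦ ?_) (by positivity)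
        refine sum_le_sum_of_subset_of_nonneg (fun b hb ↦ ?_) fun _ _ _ ↦ norm_nonneg _
        exact mem_Ioc.2 ⟨(mem_Ioc.1 (hJ (mem_filter.1 hb).1)).1, (mem_filter.1 hb).2⟩
    _ = 2 * B ^ 2 * ∑ a ∈ J, ∑ b ∈ Ioc 0 a,
          ‖expSum (fun m ↦ m) (a • θ - b • θ) (N / a)‖ := by
        congr 1
        refine sum_congr rfl fun a _ ↦ sum_congr rfl fun b hb ↦ ?_
        simp only [K, max_eq_left (mem_Ioc.1 hb).2]

lemma IsBadlyApproximableWith.sum_sum_norm_expSum_natCast_le {c : ℝ} {θ : UnitAddCircle}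
    (hθ : IsBadlyApproximableWith c θ) (N : ℕ) {U : ℕ} (hU : 0 < U) :
    ∑ a ∈ Ioc U (N / U), ∑ b ∈ Ioc 0 a, ‖expSum (fun m ↦ m) (a • θ - b • θ) (N / a)‖ ≤
      N ^ 2 * (1 + Real.log N) * (2 / c + 3) / √U := by
  have hc := hθ.1
  have hU' : (1 : ℝ) ≤ U := by exact_mod_cast hU
  have hlog := Real.log_natCast_nonneg N
  have hsqrt : 0 < √(U : ℝ) := by positivity
  have hinv : ∑ a ∈ Ioc U (N / U), (1 : ℝ) / a ≤ 1 + Real.log N :=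
    (sum_le_sum_of_subset_of_nonneg (Ioc_subset_Ioc U.zero_le (N.div_le_self U))
      fun _ _ _ ↦ by positivity).trans (sum_Ioc_one_div_le N)
  have hsqrt_le {a : ℕ} (ha : a ∈ Ioc U (N / U)) : √(U : ℝ) ≤ a :=
    (Real.sqrt_le_self_iff.2 (.inr hU')).trans (by exact_mod_cast (mem_Ioc.1 ha).1.le)
  have hcard : (#(Ioc U (N / U)) : ℝ) ≤ N / U := by
    rw [Nat.card_Ioc]
    exact (Nat.cast_le.2 (Nat.sub_le _ _)).trans Nat.cast_div_le
  calc ∑ a ∈ Ioc U (N / U), ∑ b ∈ Ioc 0 a, ‖expSum (fun m ↦ m) (a • θ - b • θ) (N / a)‖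
      ≤ ∑ a ∈ Ioc U (N / U), (2 * N ^ 2 * (1 / √U) / c * (1 / a) +
          2 * N ^ 2 * ((1 / √U) * (1 / a)) + N / (1 / √U)) := by
        refine sum_le_sum fun a ha ↦ (hθ.sum_norm_expSum_natCast_le (one_div_pos.2 hsqrt) N
          (hU.trans (mem_Ioc.1 ha).1)).trans ?_
        rw [sq (1 / (a : ℝ))]
        gcongr
        exact hsqrt_le ha
    _ = 2 * N ^ 2 / √U * (1 / c + 1) * (∑ a ∈ Ioc U (N / U), (1 : ℝ) / a) +
          #(Ioc U (N / U)) * (N * √U) := by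
        rw [sum_add_distrib, sum_add_distrib, sum_const, nsmul_eq_mul, ← mul_sum, ← mul_sum,
          ← mul_sum, div_div_eq_mul_div, div_one]
        ring
    _ ≤ 2 * N ^ 2 / √U * (1 / c + 1) * (1 + Real.log N) + N / U * (N * √U) := by gcongr
    _ = N ^ 2 / √U * ((2 / c + 2) * (1 + Real.log N) + 1) := by
        have : (U : ℝ) = √U * √U := (Real.mul_self_sqrt U.cast_nonneg).symm
        rw [this, Real.sqrt_mul_self hsqrt.le]
        field_simp
    _ ≤ N ^ 2 / √U * ((2 / c + 2) * (1 + Real.log N) + (1 + Real.log N)) := by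
        gcongr
        linarith
    _ = N ^ 2 * (1 + Real.log N) * (2 / c + 3) / √U := by ring

lemma IsBadlyApproximableWith.sq_norm_expSum_mul_le {c : ℝ} {θ : UnitAddCircle}
    (hθ : IsBadlyApproximableWith c θ) {f g : ArithmeticFunction ℝ} {N U : ℕ} {A B : ℝ}
    (hU : 0 < U) (hf : ∀ n, |f n| ≤ A) (hfU : ∀ n ≤ U, f n = 0) (hg : ∀ n ≤ N, |g n| ≤ B)
    (hgU : ∀ n ≤ U, g n = 0) :
    ‖expSum ⇑(f * g) θ N‖ ^ 2 ≤ (A * B * (1 + Real.log N) * N) ^ 2 * (4 / c + 6) / √U := by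
  have := Real.log_natCast_nonneg N
  have hB : 0 ≤ B := (abs_nonneg _).trans (hg 0 N.zero_le)
  have hJ : Ioc U (N / U) ⊆ Ioc 0 N := Ioc_subset_Ioc U.zero_le (N.div_le_self U)
  have hbound : ∀ n ≤ N, |truncLE (N / U) g n| ≤ B := fun n hn ↦ by
    rw [truncLE_apply]
    split_ifs
    · exact hg n hn
    · rwa [abs_zero]
  have hsupp : ∀ n ∉ Ioc U (N / U), truncLE (N / U) g n = 0 := fun n hn ↦ by
    rw [mem_Ioc, not_and'] at hn
    rw [truncLE_apply]
    split_ifs with h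
    · exact hgU n (not_lt.1 (hn h))
    · rfl
  rw [← expSum_mul_truncLE hU hfU, expSum_mul]
  calc ‖∑ m ∈ Ioc 0 N, (f m : ℂ) * expSum (truncLE (N / U) g) (m • θ) (N / m)‖ ^ 2
      ≤ A ^ 2 * (1 + Real.log N) *
          ∑ m ∈ Ioc 0 N, (m : ℝ) * ‖expSum (truncLE (N / U) g) (m • θ) (N / m)‖ ^ 2 :=
        sq_norm_sum_mul_le hf _ N
    _ ≤ A ^ 2 * (1 + Real.log N) *
          (2 * B ^ 2 * (N ^ 2 * (1 + Real.log N) * (2 / c + 3) / √U)) := by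
        gcongr
        refine (sum_mul_sq_norm_expSum_le hbound hJ hsupp θ).trans ?_
        gcongr
        exact hθ.sum_sum_norm_expSum_natCast_le N hU
    _ = (A * B * (1 + Real.log N) * N) ^ 2 * (4 / c + 6) / √U := by ring

end Bilinear

section Vaughan

open ArithmeticFunction hiding add_apply neg_apply

/-- The restriction of an arithmetic function to `(U, ∞)`. -/
def truncGT {R : Type*} [AddGroup R] (U : ℕ) (f : ArithmeticFunction R) : ArithmeticFunction R :=
  f - truncLE U f

lemma truncGT_apply {R : Type*} [AddGroup R] (U : ℕ) (f : ArithmeticFunction R) (n : ℕ) :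
    truncGT U f n = if n ≤ U then 0 else f n := by
  rw [truncGT, sub_eq_add_neg, ArithmeticFunction.add_apply, ArithmeticFunction.neg_apply,
    truncLE_apply]
  split_ifs <;> simp

lemma abs_truncLE_le (U : ℕ) (f : ArithmeticFunction ℝ) (n : ℕ) : |truncLE U f n| ≤ |f n| := by
  rw [truncLE_apply]
  split_ifs <;> simp

lemma abs_truncGT_le (U : ℕ) (f : ArithmeticFunction ℝ) (n : ℕ) : |truncGT U f n| ≤ |f n| := by
  rw [truncGT_apply]
  split_ifs <;> simp

lemma vonMangoldt_eq_vaughan (U : ℕ) :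
    Λ = truncLE U Λ + truncLE U (μ : ArithmeticFunction ℝ) * log
      - truncLE U (μ : ArithmeticFunction ℝ) * truncLE U Λ * ζ
      + truncGT U (μ : ArithmeticFunction ℝ) * (truncGT U Λ * ζ) := by
  have hμζ : (μ : ArithmeticFunction ℝ) * ζ = 1 := coe_moebius_mul_coe_zeta
  rw [truncGT, truncGT]
  linear_combination -((μ : ArithmeticFunction ℝ) - truncLE U (μ : ArithmeticFunction ℝ)) *
    vonMangoldt_mul_zeta - moebius_mul_log_eq_vonMangoldt + truncLE U Λ * hμζ

lemma mul_apply_eq_zero_of_lt {R : Type*} [Semiring R] {f g : ArithmeticFunction R} {K M : ℕ}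
    (hf : ∀ n, K < n → f n = 0) (hg : ∀ n, M < n → g n = 0) {n : ℕ} (hn : K * M < n) :
    (f * g) n = 0 := by
  rw [mul_apply]
  refine sum_eq_zero fun p hp ↦ ?_
  rcases lt_or_ge K p.1 with hK | hK
  · rw [hf _ hK, zero_mul]
  rcases lt_or_ge M p.2 with hM | hM
  · rw [hg _ hM, mul_zero]
  · rw [← (Nat.mem_divisorsAntidiagonal.1 hp).1] at hn
    exact absurd (Nat.mul_le_mul hK hM) hn.not_ge

lemma mul_apply_eq_zero_of_le {R : Type*} [Semiring R] {f : ArithmeticFunction R} {U : ℕ}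
    (hf : ∀ n ≤ U, f n = 0) (g : ArithmeticFunction R) {n : ℕ} (hn : n ≤ U) : (f * g) n = 0 := by
  rw [mul_apply]
  refine sum_eq_zero fun p hp ↦ ?_
  rw [hf _ ((Nat.divisor_le (Nat.fst_mem_divisors_of_mem_antidiagonal hp)).trans hn), zero_mul]

lemma abs_mul_apply_le_log {f g : ArithmeticFunction ℝ} (hf : ∀ n, |f n| ≤ 1)
    (hg : ∀ n, |g n| ≤ Λ n) (n : ℕ) : |(f * g) n| ≤ Real.log n := by
  rw [← log_apply, ← zeta_mul_vonMangoldt, mul_apply, mul_apply]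
  refine (abs_sum_le_sum_abs _ _).trans (sum_le_sum fun p hp ↦ ?_)
  have hp₁ : p.1 ≠ 0 := (Nat.pos_of_mem_divisors (Nat.fst_mem_divisors_of_mem_antidiagonal hp)).ne'
  rw [abs_mul, natCoe_apply, zeta_apply_ne hp₁, Nat.cast_one]
  exact mul_le_mul (hf _) (hg _) (abs_nonneg _) zero_le_one

lemma log_monotone : Monotone (log : ℕ → ℝ) := fun m n hmn ↦ by
  rw [log_apply, log_apply]
  rcases m.eq_zero_or_pos with rfl | hm
  · simpa using Real.log_natCast_nonneg n
  · exact Real.log_le_log (by exact_mod_cast hm) (by exact_mod_cast hmn)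

lemma zeta_monotone : Monotone ((ζ : ArithmeticFunction ℝ) : ℕ → ℝ) := fun m n hmn ↦ by
  simp only [natCoe_apply, zeta_apply]
  split_ifs
  · rfl
  · simp
  · omega
  · rfl

lemma abs_moebius_le_one_real (n : ℕ) : |(μ : ArithmeticFunction ℝ) n| ≤ 1 := by
  rw [intCoe_apply]
  exact_mod_cast abs_moebius_le_one

lemma abs_vonMangoldt (n : ℕ) : |Λ n| = Λ n :=
  abs_of_nonneg vonMangoldt_nonneg

lemma abs_zeta_le_one (n : ℕ) : |(ζ : ArithmeticFunction ℝ) n| ≤ 1 := by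
  rw [natCoe_apply, zeta_apply]
  split_ifs <;> simp

variable {c : ℝ} {θ : UnitAddCircle}

lemma IsBadlyApproximableWith.norm_expSum_moebius_mul_log_le (hθ : IsBadlyApproximableWith c θ)
    (N U : ℕ) :
    ‖expSum ⇑(truncLE U (μ : ArithmeticFunction ℝ) * log) θ N‖ ≤ U ^ 2 * Real.log N / c := by
  have h := hθ.norm_expSum_mul_le_of_monotone (f := truncLE U (μ : ArithmeticFunction ℝ)) (N := N)
    (K := U) (fun n _ ↦ (abs_truncLE_le _ _ _).trans (abs_moebius_le_one_real n))
    (fun n hn ↦ by rw [truncLE_apply, if_neg hn.not_ge]) log_monotone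
  rwa [mul_one, log_apply] at h

lemma IsBadlyApproximableWith.norm_expSum_moebius_mul_vonMangoldt_mul_zeta_le
    (hθ : IsBadlyApproximableWith c θ) (N U : ℕ) :
    ‖expSum ⇑(truncLE U (μ : ArithmeticFunction ℝ) * truncLE U Λ * ζ) θ N‖ ≤
      U ^ 4 * Real.log N / c := by
  have hsupp {f : ArithmeticFunction ℝ} (n : ℕ) (hn : U < n) : truncLE U f n = 0 := by
    rw [truncLE_apply, if_neg hn.not_ge]
  have h := hθ.norm_expSum_mul_le_of_monotone (N := N) (K := U * U) (A := Real.log N)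
    (f := truncLE U (μ : ArithmeticFunction ℝ) * truncLE U Λ)
    (fun n hn ↦ (abs_mul_apply_le_log
      (fun k ↦ (abs_truncLE_le U _ k).trans (abs_moebius_le_one_real k))
      (fun k ↦ (abs_truncLE_le U _ k).trans_eq (abs_vonMangoldt k)) n).trans (log_monotone hn))
    (fun n hn ↦ mul_apply_eq_zero_of_lt hsupp hsupp hn) zeta_monotone
  refine h.trans ?_
  have hζ := (le_abs_self _).trans (abs_zeta_le_one N)
  have := Real.log_natCast_nonneg N
  have hc := hθ.1
  calc ((U * U : ℕ) : ℝ) ^ 2 * Real.log N * (ζ : ArithmeticFunction ℝ) N / c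
      ≤ ((U * U : ℕ) : ℝ) ^ 2 * Real.log N * 1 / c := by gcongr
    _ = U ^ 4 * Real.log N / c := by push_cast; ring

lemma IsBadlyApproximableWith.norm_expSum_truncGT_mul_truncGT_le
    (hθ : IsBadlyApproximableWith c θ) (N : ℕ) {U : ℕ} (hU : 0 < U) :
    ‖expSum ⇑(truncGT U (μ : ArithmeticFunction ℝ) * (truncGT U Λ * ζ)) θ N‖ ≤
      (1 + Real.log N) ^ 2 * N * √((4 / c + 6) / √U) := by
  have hlog := Real.log_natCast_nonneg N
  have hc := hθ.1
  have hsupp {f : ArithmeticFunction ℝ} (n : ℕ) (hn : n ≤ U) : truncGT U f n = 0 := by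
    rw [truncGT_apply, if_pos hn]
  have h := hθ.sq_norm_expSum_mul_le (N := N) (A := 1) (B := Real.log N)
    (f := truncGT U (μ : ArithmeticFunction ℝ)) (g := truncGT U Λ * ζ) hU
    (fun n ↦ (abs_truncGT_le U _ n).trans (abs_moebius_le_one_real n)) hsupp
    (fun n hn ↦ by
      rw [mul_comm]
      exact (abs_mul_apply_le_log abs_zeta_le_one
        (fun k ↦ (abs_truncGT_le U _ k).trans_eq (abs_vonMangoldt k)) n).trans (log_monotone hn))
    (fun n hn ↦ mul_apply_eq_zero_of_le hsupp _ hn)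
  refine le_of_sq_le_sq (h.trans ?_) (by positivity)
  rw [mul_pow _ √_, Real.sq_sqrt (by positivity), mul_div_assoc]
  gcongr
  nlinarith

lemma IsBadlyApproximableWith.norm_expSum_vonMangoldt_le (hθ : IsBadlyApproximableWith c θ)
    (N : ℕ) {U : ℕ} (hU : 0 < U) :
    ‖expSum Λ θ N‖ ≤ (U + U ^ 2 / c + U ^ 4 / c) * Real.log N +
      (1 + Real.log N) ^ 2 * N * √((4 / c + 6) / √U) := by
  have hvaughan : expSum Λ θ N = expSum (truncLE U Λ) θ N +
      expSum ⇑(truncLE U (μ : ArithmeticFunction ℝ) * log) θ N -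
      expSum ⇑(truncLE U (μ : ArithmeticFunction ℝ) * truncLE U Λ * ζ) θ N +
      expSum ⇑(truncGT U (μ : ArithmeticFunction ℝ) * (truncGT U Λ * ζ)) θ N := by
    simp only [expSum]
    rw [← sum_add_distrib, ← sum_sub_distrib, ← sum_add_distrib]
    refine sum_congr rfl fun n _ ↦ ?_
    have := congr_arg (fun f : ArithmeticFunction ℝ ↦ f n) (vonMangoldt_eq_vaughan U)
    simp only [sub_eq_add_neg, ArithmeticFunction.add_apply, ArithmeticFunction.neg_apply] at this
    rw [this]
    push_cast
    ring
  have hΛ : ∀ n ≤ N, |Λ n| ≤ Real.log N := fun n hn ↦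
    (abs_vonMangoldt n).trans_le (vonMangoldt_le_log.trans (log_monotone hn))
  rw [hvaughan]
  refine (norm_add_le_of_le (norm_sub_le_of_le (norm_add_le_of_le
    (norm_expSum_truncLE_le hΛ θ U) (hθ.norm_expSum_moebius_mul_log_le N U))
    (hθ.norm_expSum_moebius_mul_vonMangoldt_mul_zeta_le N U))
    (hθ.norm_expSum_truncGT_mul_truncGT_le N hU)).trans_eq ?_
  ring

lemma mul_sqrt_div_sqrt_le {D N u x : ℝ} (hD : 0 ≤ D) (hx : 0 < x) (hN : x ^ 20 = N)
    (hu : x ^ 4 < u + 1) (hu₁ : 1 ≤ u) : N * √(D / √u) ≤ √(2 * D) * x ^ 19 := by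
  have hsqrt : x ^ 2 / 2 ≤ √u := Real.le_sqrt_of_sq_le (by nlinarith)
  calc N * √(D / √u) ≤ N * √(D / (x ^ 2 / 2)) := by rw [← hN]; gcongr
    _ = N * (√(2 * D) / x) := by
      rw [show D / (x ^ 2 / 2) = 2 * D / x ^ 2 by field_simp, Real.sqrt_div (by positivity),
        Real.sqrt_sq hx.le]
    _ = √(2 * D) * x ^ 19 := by rw [← hN]; field_simp

lemma IsBadlyApproximableWith.norm_expSum_vonMangoldt_le_mul_pow
    (hθ : IsBadlyApproximableWith c θ) {N : ℕ} {x : ℝ} (hx : 1 ≤ x) (hxN : x ^ 20 = N) :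
    ‖expSum Λ θ N‖ ≤
      (1 + 1 / c + 1 / c + √(2 * (4 / c + 6))) * ((1 + Real.log N) ^ 2 * x ^ 19) := by
  have hc := hθ.1
  have hlog := Real.log_natCast_nonneg N
  -- With `U ≈ x ^ 4 = N ^ (1 / 5)`, `U ^ 4` and `N / U ^ (1 / 4)` are about `x ^ 16` and `x ^ 19`.
  set U := ⌊x ^ 4⌋₊
  have hUpos : 0 < U := Nat.floor_pos.2 (one_le_pow₀ hx)
  have hU₁ : (1 : ℝ) ≤ U := by exact_mod_cast hUpos
  have hUle : (U : ℝ) ≤ x ^ 4 := Nat.floor_le (by positivity)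
  have hU4 : (U : ℝ) ^ 4 ≤ x ^ 19 := by
    calc (U : ℝ) ^ 4 ≤ (x ^ 4) ^ 4 := by gcongr
      _ = x ^ 16 := by ring
      _ ≤ x ^ 19 := pow_le_pow_right₀ hx (by norm_num)
  have hU2 : (U : ℝ) ^ 2 ≤ x ^ 19 := (pow_le_pow_right₀ hU₁ (by norm_num)).trans hU4
  have hU1 : (U : ℝ) ≤ x ^ 19 := (le_self_pow₀ hU₁ (by norm_num)).trans hU4
  have hbilinear := mul_sqrt_div_sqrt_le (D := 4 / c + 6) (by positivity)
    (zero_lt_one.trans_le hx) hxN (Nat.lt_floor_add_one (x ^ 4)) hU₁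
  have hlog_le : Real.log N ≤ (1 + Real.log N) ^ 2 := by nlinarith
  calc ‖expSum Λ θ N‖ ≤ (U + U ^ 2 / c + U ^ 4 / c) * Real.log N +
          (1 + Real.log N) ^ 2 * N * √((4 / c + 6) / √U) := hθ.norm_expSum_vonMangoldt_le N hUpos
    _ ≤ (x ^ 19 + x ^ 19 / c + x ^ 19 / c) * (1 + Real.log N) ^ 2 +
          (1 + Real.log N) ^ 2 * (√(2 * (4 / c + 6)) * x ^ 19) := by
        rw [mul_assoc _ (N : ℝ)]
        gcongr
    _ = (1 + 1 / c + 1 / c + √(2 * (4 / c + 6))) * ((1 + Real.log N) ^ 2 * x ^ 19) := by ring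

lemma IsBadlyApproximable.exists_norm_expSum_vonMangoldt_le (hθ : IsBadlyApproximable θ) :
    ∃ C : ℝ, ∀ N : ℕ, ‖expSum Λ θ N‖ ≤ C * ((1 + Real.log N) ^ 2 * (N : ℝ) ^ (19 / 20 : ℝ)) := by
  obtain ⟨c, hθ⟩ := hθ
  refine ⟨1 + 1 / c + 1 / c + √(2 * (4 / c + 6)), fun N ↦ ?_⟩
  rcases N.eq_zero_or_pos with rfl | hN
  · simp [expSum]
  have hpow (k : ℕ) : ((N : ℝ) ^ (1 / 20 : ℝ)) ^ k = (N : ℝ) ^ (k / 20 : ℝ) := by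
    rw [← Real.rpow_natCast, ← Real.rpow_mul N.cast_nonneg, one_div_mul_eq_div]
  have hx : 1 ≤ (N : ℝ) ^ (1 / 20 : ℝ) :=
    Real.one_le_rpow (by exact_mod_cast hN) (by norm_num)
  have h := hθ.norm_expSum_vonMangoldt_le_mul_pow (N := N) hx (by rw [hpow]; norm_num)
  rwa [hpow] at h

lemma isLittleO_one_add_log_rpow {r : ℝ} (hr : 0 < r) :
    (fun N : ℕ ↦ 1 + Real.log N) =o[atTop] fun N : ℕ ↦ (N : ℝ) ^ r := by
  have hpow : Tendsto (fun N : ℕ ↦ (N : ℝ) ^ r) atTop atTop :=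
    (tendsto_rpow_atTop hr).comp tendsto_natCast_atTop_atTop
  exact (Asymptotics.isLittleO_const_left.2 (.inr (tendsto_norm_atTop_atTop.comp hpow))).add
    ((isLittleO_log_rpow_atTop hr).comp_tendsto tendsto_natCast_atTop_atTop)

theorem IsBadlyApproximable.expSum_vonMangoldt_isLittleO (hθ : IsBadlyApproximable θ) :
    (expSum Λ θ) =o[atTop] fun N : ℕ ↦ (N : ℝ) := by
  obtain ⟨C, hC⟩ := hθ.exists_norm_expSum_vonMangoldt_le
  have hbound : (expSum Λ θ) =O[atTop]
      fun N : ℕ ↦ (1 + Real.log N) ^ 2 * (N : ℝ) ^ (19 / 20 : ℝ) := by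
    refine Asymptotics.IsBigO.of_bound C (.of_forall fun N ↦ (hC N).trans_eq ?_)
    rw [Real.norm_of_nonneg (by positivity)]
  have hlog := ((isLittleO_one_add_log_rpow (r := 1 / 40) (by norm_num)).pow two_pos).mul_isBigO
    (Asymptotics.isBigO_refl (fun N : ℕ ↦ (N : ℝ) ^ (19 / 20 : ℝ)) atTop)
  refine (hbound.trans_isLittleO hlog).congr_right fun N ↦ ?_
  rw [← Real.rpow_mul_natCast N.cast_nonneg, ← Real.rpow_add_of_nonneg N.cast_nonneg
    (by norm_num) (by norm_num)]
  norm_num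

end Vaughan

section Primes

open Asymptotics Chebyshev

open scoped Nat.Prime

lemma natCast_isBigO_primeCounting_mul_log :
    (fun N : ℕ ↦ (N : ℝ)) =O[atTop] fun N ↦ (π N : ℝ) * Real.log N := by
  have hmul : (fun N : ℕ ↦ (N : ℝ)) =O[atTop] fun N : ℕ ↦ (N : ℝ) * Real.log 2 := by
    simp only [mul_comm _ (Real.log 2)]
    exact (isBigO_refl _ _).const_mul_right (Real.log_pos one_lt_two).ne'
  have hsucc : (fun N : ℕ ↦ (N : ℝ) + 1) =O[atTop] fun N : ℕ ↦ (N : ℝ) := by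
    refine (isBigO_refl _ _).add (IsBigO.of_bound' ?_)
    filter_upwards [eventually_ge_atTop 1] with N hN
    simpa using hN
  have hlog : (fun N : ℕ ↦ Real.log (N + 1)) =o[atTop] fun N : ℕ ↦ (N : ℝ) * Real.log 2 :=
    (Real.isLittleO_log_id_atTop.comp_tendsto (tendsto_atTop_add_const_right _ 1
      tendsto_natCast_atTop_atTop)).trans_isBigO (hsucc.trans hmul)
  refine (hmul.trans hlog.right_isBigO_sub).trans (IsBigO.of_bound' (.of_forall fun N ↦ ?_))
  have hnonneg : Real.log (N + 1) ≤ N * Real.log 2 := by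
    rw [← Real.log_pow]
    exact Real.log_le_log (by positivity) (by exact_mod_cast N.lt_two_pow_self)
  rw [Real.norm_of_nonneg (sub_nonneg.2 hnonneg)]
  exact ((psi_ge N).trans (psi_le_primeCounting_mul_log N)).trans (le_abs_self _)

lemma primeCounting_mul_log_sub_theta_isLittleO :
    (fun N : ℕ ↦ (π N : ℝ) * Real.log N - theta N) =o[atTop] fun N ↦ (N : ℝ) := by
  have hlog : Tendsto (fun N : ℕ ↦ Real.log N) atTop atTop :=
    Real.tendsto_log_atTop.comp tendsto_natCast_atTop_atTop
  have hdiv : (fun N : ℕ ↦ (π N : ℝ) * Real.log N - theta N) =O[atTop]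
      fun N ↦ (N : ℝ) / Real.log N := by
    refine ((primeCounting_sub_theta_div_log_isBigO.comp_tendsto
      tendsto_natCast_atTop_atTop).mul
      (isBigO_refl (fun N : ℕ ↦ Real.log N) atTop)).congr' ?_ ?_ <;>
    filter_upwards [hlog.eventually_gt_atTop 0] with N hN
    · simp only [Function.comp_apply, Nat.floor_natCast]
      field_simp
    · simp only [Function.comp_apply]
      field_simp
  refine hdiv.trans_isLittleO ?_
  have hinv : (fun N : ℕ ↦ (Real.log N)⁻¹) =o[atTop] fun _ ↦ (1 : ℝ) :=
    (isLittleO_one_iff ℝ).2 hlog.inv_tendsto_atTop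
  simpa only [div_eq_mul_inv, mul_one] using
    (isBigO_refl (fun N : ℕ ↦ (N : ℝ)) atTop).mul_isLittleO hinv

lemma psi_sub_theta_isLittleO :
    (fun N : ℕ ↦ psi N - theta N) =o[atTop] fun N ↦ (N : ℝ) := by
  refine (isBigO_psi_sub_theta_sqrt.comp_tendsto tendsto_natCast_atTop_atTop).trans_isLittleO ?_
  have hsqrt : Tendsto (fun N : ℕ ↦ √(N : ℝ)) atTop atTop :=
    Real.tendsto_sqrt_atTop.comp tendsto_natCast_atTop_atTop
  have hone : (fun _ : ℕ ↦ (1 : ℝ)) =o[atTop] fun N : ℕ ↦ √(N : ℝ) :=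
    isLittleO_const_left.2 (.inr (tendsto_norm_atTop_atTop.comp hsqrt))
  refine ((isBigO_refl (fun N : ℕ ↦ √(N : ℝ)) atTop).mul_isLittleO hone).congr ?_ ?_ <;> intro N
  · exact mul_one _
  · exact Real.mul_self_sqrt N.cast_nonneg

variable {h : ℕ → ℂ}

lemma norm_sum_primesLE_mul_log_sub_le (hh : ∀ n, ‖h n‖ ≤ 1) (N : ℕ) :
    ‖(∑ p ∈ N.primesLE, h p) * Real.log N - ∑ p ∈ N.primesLE, Real.log p * h p‖ ≤
      π N * Real.log N - theta N := by
  rw [theta_eq_sum_primesLE_log, ← Nat.primesLE_card_eq_primeCounting, ← nsmul_eq_mul, ← sum_const,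
    ← sum_sub_distrib, sum_mul, ← sum_sub_distrib]
  refine norm_sum_le_of_le _ fun p hp ↦ ?_
  have hlog : Real.log p ≤ Real.log N := log_monotone (Nat.le_of_mem_primesLE hp)
  rw [mul_comm, ← sub_mul, ← Complex.ofReal_sub, norm_mul, Complex.norm_real,
    Real.norm_of_nonneg (sub_nonneg.2 hlog)]
  exact mul_le_of_le_one_right (sub_nonneg.2 hlog) (hh p)

lemma norm_sum_vonMangoldt_mul_sub_le (hh : ∀ n, ‖h n‖ ≤ 1) (N : ℕ) :
    ‖∑ n ∈ Ioc 0 N, (Λ n : ℂ) * h n - ∑ p ∈ N.primesLE, Real.log p * h p‖ ≤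
      psi N - theta N := by
  have hprimes : ∑ p ∈ N.primesLE, (Real.log p : ℂ) * h p =
      ∑ n ∈ Ioc 0 N with n.Prime, (Λ n : ℂ) * h n := by
    rw [Nat.primesLE_eq_filter_Ioc_zero]
    refine sum_congr rfl fun p hp ↦ ?_
    rw [ArithmeticFunction.vonMangoldt_apply_prime (mem_filter.1 hp).2]
  rw [psi_sub_theta_eq_sum_not_prime, Nat.floor_natCast, hprimes,
    ← sum_filter_add_sum_filter_not (Ioc 0 N) Nat.Prime, add_sub_cancel_left]
  refine norm_sum_le_of_le _ fun n _ ↦ ?_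
  rw [norm_mul, Complex.norm_real, Real.norm_eq_abs, abs_vonMangoldt]
  exact mul_le_of_le_one_right ArithmeticFunction.vonMangoldt_nonneg (hh n)

theorem sum_primesLE_isLittleO_of_sum_vonMangoldt_mul_isLittleO (hh : ∀ n, ‖h n‖ ≤ 1)
    (hΛ : (fun N ↦ ∑ n ∈ Ioc 0 N, (Λ n : ℂ) * h n) =o[atTop] fun N : ℕ ↦ (N : ℝ)) :
    (fun N ↦ ∑ p ∈ N.primesLE, h p) =o[atTop] fun N ↦ (π N : ℝ) := by
  have hlog : (fun N : ℕ ↦ (∑ p ∈ N.primesLE, h p) * Real.log N -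
      ∑ p ∈ N.primesLE, Real.log p * h p) =o[atTop] fun N ↦ (N : ℝ) :=
    (IsBigO.of_bound' (.of_forall fun N ↦ (norm_sum_primesLE_mul_log_sub_le hh N).trans
      (le_abs_self _))).trans_isLittleO primeCounting_mul_log_sub_theta_isLittleO
  have hpow : (fun N ↦ ∑ n ∈ Ioc 0 N, (Λ n : ℂ) * h n -
      ∑ p ∈ N.primesLE, Real.log p * h p) =o[atTop] fun N ↦ (N : ℝ) :=
    (IsBigO.of_bound' (.of_forall fun N ↦ (norm_sum_vonMangoldt_mul_sub_le hh N).trans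
      (le_abs_self _))).trans_isLittleO psi_sub_theta_isLittleO
  have hmul : (fun N : ℕ ↦ (∑ p ∈ N.primesLE, h p) * (Real.log N : ℂ)) =o[atTop]
      fun N ↦ (π N : ℝ) * Real.log N :=
    (((hlog.sub hpow).add hΛ).congr_left fun N ↦ by ring).trans_isBigO
      natCast_isBigO_primeCounting_mul_log
  have hinv : (fun N : ℕ ↦ ((Real.log N : ℝ) : ℂ)⁻¹) =O[atTop] fun N : ℕ ↦ (Real.log N)⁻¹ :=
    isBigO_of_le _ fun N ↦ by rw [norm_inv, norm_inv, Complex.norm_real]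
  refine (hmul.mul_isBigO hinv).congr' ?_ ?_ <;>
  filter_upwards [eventually_gt_atTop 1] with N hN
  · have hN : (Real.log N : ℂ) ≠ 0 := by
      exact_mod_cast (Real.log_pos (by exact_mod_cast hN)).ne'
    rw [mul_assoc, mul_inv_cancel₀ hN, mul_one]
  · have hN : Real.log N ≠ 0 := (Real.log_pos (by exact_mod_cast hN)).ne'
    rw [mul_assoc, mul_inv_cancel₀ hN, mul_one]

end Primes

section Weyl

open scoped ENNReal

variable {T : ℝ} [Fact (0 < T)] {κ : Type*} {l : Filter κ}

lemma tendsto_integral_of_mem_span_fourier {ν : κ → ProbabilityMeasure (AddCircle T)}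
    {ν₀ : ProbabilityMeasure (AddCircle T)}
    (hν : ∀ n : ℤ, Tendsto (fun k ↦ ∫ y : AddCircle T, fourier n y ∂(ν k)) l
      (𝓝 (∫ y : AddCircle T, fourier n y ∂ν₀)))
    {g : C(AddCircle T, ℂ)} (hg : g ∈ Submodule.span ℂ (Set.range (@fourier T))) :
    Tendsto (fun k ↦ ∫ y, g y ∂(ν k)) l (𝓝 (∫ y, g y ∂ν₀)) := by
  have hint (ρ : ProbabilityMeasure (AddCircle T)) (g : C(AddCircle T, ℂ)) :
      Integrable g (ρ : Measure (AddCircle T)) :=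
    g.continuous.integrable_of_hasCompactSupport (.of_compactSpace _)
  induction hg using Submodule.span_induction with
  | mem g hg =>
    obtain ⟨n, rfl⟩ := hg
    exact hν n
  | zero => simpa using tendsto_const_nhds
  | add f g _ _ hf hg =>
    simpa only [ContinuousMap.add_apply, integral_add (hint _ f) (hint _ g)] using hf.add hg
  | smul a g _ hg =>
    simpa only [ContinuousMap.smul_apply, integral_smul] using hg.const_smul a

theorem tendsto_probabilityMeasure_of_tendsto_integral_fourier
    {ν : κ → ProbabilityMeasure (AddCircle T)} {ν₀ : ProbabilityMeasure (AddCircle T)}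
    (hν : ∀ n : ℤ, Tendsto (fun k ↦ ∫ y : AddCircle T, fourier n y ∂(ν k)) l
      (𝓝 (∫ y : AddCircle T, fourier n y ∂ν₀))) :
    Tendsto ν l (𝓝 ν₀) := by
  refine ProbabilityMeasure.tendsto_of_tight_of_separatesPoints ℂ .of_compactSpace
    (A := fourierSubalgebra.comap (BoundedContinuousFunction.toContinuousMapStarₐ ℂ)) ?_
    fun g hg ↦ tendsto_integral_of_mem_span_fourier hν (g := g.toContinuousMap) ?_
  · intro y z hyz
    obtain ⟨_, ⟨g, hg, rfl⟩, hne⟩ := fourierSubalgebra_separatesPoints hyz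
    exact ⟨g, ⟨g, ⟨.mkOfCompact g, hg, rfl⟩, rfl⟩, hne⟩
  · rw [← fourierSubalgebra_coe]
    exact hg

lemma integral_fourier_haarAddCircle {n : ℤ} (hn : n ≠ 0) :
    ∫ y : AddCircle T, fourier n y ∂haarAddCircle = 0 := by
  simpa [fourierCoeff, hn] using congr_fun (fourierCoeff_fourier (T := T) n) 0

/-- The uniform probability measure on the points `x i` for `i ∈ s`, counted with multiplicity. -/
noncomputable def empiricalMeasure {ι X : Type*} [MeasurableSpace X] (s : Finset ι)
    (hs : s.Nonempty) (x : ι → X) : ProbabilityMeasure X :=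
  ⟨(#s : ℝ≥0∞)⁻¹ • ∑ i ∈ s, Measure.dirac (x i), ⟨by
    simp [ENNReal.inv_mul_cancel (Nat.cast_ne_zero.2 hs.card_ne_zero)]⟩⟩

section EmpiricalMeasure

variable {ι X : Type*} [MeasurableSpace X] [MeasurableSingletonClass X] {s : Finset ι}

lemma integral_empiricalMeasure (hs : s.Nonempty) (x : ι → X) (f : X → ℂ) :
    ∫ y, f y ∂(empiricalMeasure s hs x) = (∑ i ∈ s, f (x i)) / #s := by
  rw [empiricalMeasure, ProbabilityMeasure.coe_mk, integral_smul_measure,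
    integral_finsetSum_measure fun i _ ↦ integrable_dirac (by simp)]
  simp [div_eq_inv_mul]

lemma empiricalMeasure_real_apply (hs : s.Nonempty) (x : ι → X) (E : Set X)
    [∀ i, Decidable (x i ∈ E)] :
    (empiricalMeasure s hs x : Measure X).real E = (#{i ∈ s | x i ∈ E} : ℝ) / #s := by
  classical
  rw [empiricalMeasure, ProbabilityMeasure.coe_mk, measureReal_def]
  simp [Measure.dirac_apply, Set.indicator_apply, div_eq_inv_mul]

end EmpiricalMeasure

theorem tendsto_card_filter_div_card_of_tendsto_sum_fourier {ι : Type*} {S : κ → Finset ι}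
    (hS : ∀ k, (S k).Nonempty) {x : ι → AddCircle T}
    (hx : ∀ n : ℤ, n ≠ 0 → Tendsto (fun k ↦ (∑ i ∈ S k, fourier n (x i)) / #(S k)) l (𝓝 0))
    {E : Set (AddCircle T)} [∀ i, Decidable (x i ∈ E)] (hE : haarAddCircle (frontier E) = 0) :
    Tendsto (fun k ↦ (#{i ∈ S k | x i ∈ E} : ℝ) / #(S k)) l (𝓝 (haarAddCircle.real E)) := by
  have hweak : Tendsto (fun k ↦ empiricalMeasure (S k) (hS k) x) l
      (𝓝 ⟨haarAddCircle, inferInstance⟩) := by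
    refine tendsto_probabilityMeasure_of_tendsto_integral_fourier fun n ↦ ?_
    rcases eq_or_ne n 0 with rfl | hn
    · simpa using tendsto_const_nhds
    · simpa only [integral_empiricalMeasure, ProbabilityMeasure.coe_mk,
        integral_fourier_haarAddCircle hn] using hx n hn
  have h := ProbabilityMeasure.tendsto_measure_of_null_frontier_of_tendsto' hweak hE
  refine ((ENNReal.tendsto_toReal (measure_ne_top haarAddCircle E)).comp h).congr fun k ↦ ?_
  exact empiricalMeasure_real_apply (hS k) x E

end Weyl

section Arcs

variable {T a b : ℝ}

lemma isOpen_coe_image_Ioo : IsOpen (((↑) : ℝ → AddCircle T) '' Set.Ioo a b) :=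
  QuotientAddGroup.isOpenMap_coe _ isOpen_Ioo

lemma coe_mem_coe_image_Ioo_iff (ha : 0 ≤ a) (hb : b ≤ 1) (x : ℝ) :
    (x : UnitAddCircle) ∈ ((↑) : ℝ → UnitAddCircle) '' Set.Ioo a b ↔
      a < Int.fract x ∧ Int.fract x < b := by
  refine ⟨?_, fun hx ↦ ⟨Int.fract x, hx, AddCircle.coe_fract x⟩⟩
  rintro ⟨y, hy, hyx⟩
  have hy_mem : y ∈ Set.Ico (0 : ℝ) (0 + 1) :=
    ⟨ha.trans hy.1.le, by linarith [hy.2]⟩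
  have hfract_mem : Int.fract x ∈ Set.Ico (0 : ℝ) (0 + 1) :=
    ⟨Int.fract_nonneg x, by linarith [Int.fract_lt_one x]⟩
  rwa [← (coe_eq_coe_iff_of_mem_Ico hy_mem hfract_mem).1 (hyx.trans (AddCircle.coe_fract x).symm)]

variable [Fact (0 < T)]

lemma volume_coe_image_Ioo (hb : b ≤ a + T) :
    volume (((↑) : ℝ → AddCircle T) '' Set.Ioo a b) = ENNReal.ofReal (b - a) := by
  have hpreimage : QuotientAddGroup.mk ⁻¹' (((↑) : ℝ → AddCircle T) '' Set.Ioo a b) ∩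
      Set.Ioc a (a + T) = Set.Ioo a b := by
    have hsub : Set.Ioo a b ⊆ Set.Ioc a (a + T) := fun y hy ↦ ⟨hy.1, hy.2.le.trans hb⟩
    ext y
    refine ⟨?_, fun hy ↦ ⟨⟨y, hy, rfl⟩, hsub hy⟩⟩
    rintro ⟨⟨z, hz, hzy⟩, hy⟩
    rwa [← (coe_eq_coe_iff_of_mem_Ioc (hsub hz) hy).1 hzy]
  rw [add_projection_respects_measure T a isOpen_coe_image_Ioo.measurableSet, hpreimage,
    Real.volume_Ioo]

lemma volume_frontier_coe_image_Ioo :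
    volume (frontier (((↑) : ℝ → AddCircle T) '' Set.Ioo a b)) = 0 := by
  have hclosed : IsClosed (((↑) : ℝ → AddCircle T) '' Set.Icc a b) :=
    (isCompact_Icc.image (AddCircle.continuous_mk' T)).isClosed
  have hsub : frontier (((↑) : ℝ → AddCircle T) '' Set.Ioo a b) ⊆ {(a : AddCircle T), ↑b} := by
    rw [isOpen_coe_image_Ioo.frontier_eq]
    rintro _ ⟨hcl, hnot_mem⟩
    obtain ⟨y, hy, rfl⟩ := closure_minimal (Set.image_mono Set.Ioo_subset_Icc_self) hclosed hcl
    rcases Set.eq_endpoints_or_mem_Ioo_of_mem_Icc hy with rfl | rfl | hy_mem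
    · exact .inl rfl
    · exact .inr rfl
    · exact absurd ⟨y, hy_mem, rfl⟩ hnot_mem
  have hpoint (x : AddCircle T) : volume {x} = 0 := by
    simpa using AddCircle.volume_closedBall (T := T) (x := x) 0
  exact measure_mono_null hsub (measure_union_null (hpoint a) (hpoint b))

lemma haarAddCircle_eq_volume : (haarAddCircle : Measure UnitAddCircle) = volume := by
  rw [volume_eq_smul_haarAddCircle, ENNReal.ofReal_one, one_smul]

end Arcs

section Density

theorem IsBadlyApproximable.sum_primesLE_fourier_isLittleO {θ : UnitAddCircle}
    (hθ : IsBadlyApproximable θ) {n : ℤ} (hn : n ≠ 0) :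
    (fun N : ℕ ↦ ∑ p ∈ N.primesLE, fourier n (p • θ)) =o[atTop]
      fun N : ℕ ↦ (N.primeCounting : ℝ) := by
  refine sum_primesLE_isLittleO_of_sum_vonMangoldt_mul_isLittleO
    (h := fun p ↦ fourier n (p • θ)) (fun p ↦ (Circle.norm_coe _).le) ?_
  refine (hθ.zsmul hn).expSum_vonMangoldt_isLittleO.congr_left fun N ↦ ?_
  simp only [expSum, fourier_apply, smul_comm n]

theorem IsBadlyApproximable.tendsto_card_primesLE_filter_div {θ : UnitAddCircle}
    (hθ : IsBadlyApproximable θ) {E : Set UnitAddCircle} [∀ p : ℕ, Decidable (p • θ ∈ E)]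
    (hE : volume (frontier E) = 0) :
    Tendsto (fun N : ℕ ↦ (#{p ∈ N.primesLE | p • θ ∈ E} : ℝ) / N.primeCounting) atTop
      (𝓝 (volume.real E)) := by
  rw [← haarAddCircle_eq_volume] at hE ⊢
  simp only [← Nat.primesLE_card_eq_primeCounting]
  refine (tendsto_add_atTop_iff_nat 2).1 (tendsto_card_filter_div_card_of_tendsto_sum_fourier
    (fun N ↦ ⟨2, Nat.mem_primesLE.2 ⟨by omega, Nat.prime_two⟩⟩) (fun n hn ↦ ?_) hE)
  have h := Complex.isLittleO_ofReal_right.2 (hθ.sum_primesLE_fourier_isLittleO hn)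
  simp only [Complex.ofReal_natCast, ← Nat.primesLE_card_eq_primeCounting] at h
  exact h.tendsto_div_nhds_zero.comp (tendsto_add_atTop_nat 2)

theorem density_of_special_primes_general (η : ℝ) (hη : IsBadlyApproximable (η : UnitAddCircle))
    (a b : ℝ) (ha : 0 ≤ a) (hab : a ≤ b) (hb : b ≤ 1) :
    Tendsto (fun N : ℕ =>
      (((Finset.range (N + 1)).filter fun p =>
          Nat.Prime p ∧ a < Int.fract (η * p) ∧ Int.fract (η * p) < b).card : ℝ)
        / (Nat.primeCounting N : ℝ)) atTop (nhds (b - a)) := by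
  classical
  have h := hη.tendsto_card_primesLE_filter_div
    (volume_frontier_coe_image_Ioo (T := 1) (a := a) (b := b))
  rw [measureReal_def, volume_coe_image_Ioo (by linarith),
    ENNReal.toReal_ofReal (sub_nonneg.2 hab)] at h
  refine h.congr fun N ↦ ?_
  have hmem (p : ℕ) : p • (η : UnitAddCircle) ∈ ((↑) : ℝ → UnitAddCircle) '' Set.Ioo a b ↔
      a < Int.fract (η * p) ∧ Int.fract (η * p) < b := by
    rw [← coe_mem_coe_image_Ioo_iff ha hb, mul_comm, ← nsmul_eq_mul, AddCircle.coe_nsmul]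
  simp only [hmem, Nat.primesLE_eq_filter_range, filter_filter]

end Density

theorem density_of_special_primes (η : ℝ) (hη : IsQuadraticIrrational η)
    (a b : ℝ) (ha : 0 < a) (hab : a < b) (hb : b < 1) :
    Tendsto (fun N : ℕ =>
      (((Finset.range (N + 1)).filter fun p =>
          Nat.Prime p ∧ a < Int.fract (η * p) ∧ Int.fract (η * p) < b).card : ℝ)
        / (Nat.primeCounting N : ℝ)) atTop (nhds (b - a)) :=
  density_of_special_primes_general η hη.isBadlyApproximable a b ha.le hab.le hb.le
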